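/- Let P be a simplicial reflexive d-polytope and F a facet of P. Then for every vertex w of F there is at most one vertex x of P with ⟨u_F, x⟩ = 0 and ⟨u_F^w, x⟩ < 0. Consequently, the number of vertices x of P with ⟨u_F, x⟩ = 0 is at most d. -/

import Mathlib

/-! Write `V(F)` for the vertices on a facet `F`.  A dimension count shows that `V(F)` spans the
space (`span_vertsOn`), so by simpliciality it is a basis.  Given `w ∈ V(F)`, tilt the
supporting functional: put `u' = u_F - t u_F^w` and let `t > 0` grow until `u'` reaches the
value `1` at some vertex `y` with `⟨u_F^w, y⟩ < 0`.  Then `u'` supports a facet `F'`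
(`isFacet_of_span`) whose vertices include `V(F) \ {w}` and `y`, and by simpliciality these are
all of them.  By reflexivity `u'` is integral.  If a vertex `x` satisfies `⟨u_F, x⟩ = 0` and
`⟨u_F^w, x⟩ < 0`, then `⟨u', x⟩ = -t ⟨u_F^w, x⟩` is a positive integer that is at most `1`, so
`x` lies on `F'`; as `x` is not on `F`, it must be `y` (`exists_unique_candidate`).

For the bound, a vertex `x` with `⟨u_F, x⟩ = 0` is a nonzero combination of `V(F)` whose
coefficients `⟨u_F^w, x⟩` add up to `0`, so one of them is negative.  Sending `x` to such a `w`
is injective by the first part, and `V(F)` has `d` elements. -/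

open Finset

/-- A point of `ℝ^d` is a lattice point if all of its coordinates are integers. -/
def IsLatticePt {d : ℕ} (x : Fin d → ℝ) : Prop := ∀ i, ∃ z : ℤ, x i = (z : ℝ)

/-- The pairing between `M_ℝ` and `N_ℝ`, both identified with `ℝ^d`. -/
noncomputable def pairing {d : ℕ} (u x : Fin d → ℝ) : ℝ := ∑ i, u i * x i

/-- The `i`-th standard basis vector of `ℝ^d`. -/
noncomputable def stdVec {d : ℕ} (i : Fin d) : Fin d → ℝ := Pi.single i 1

/-- A polytope in `ℝ^d`, given by its finite vertex set (each listed point is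
required to be an extreme point of the convex hull, i.e. a genuine vertex). -/
structure Polytope (d : ℕ) where
  verts : Finset (Fin d → ℝ)
  vertsExtreme : ∀ v ∈ verts,
    v ∈ Set.extremePoints ℝ (convexHull ℝ (verts : Set (Fin d → ℝ)))

namespace Polytope

variable {d : ℕ}

/-- The polytope as a subset of `ℝ^d`. -/
def carrier (P : Polytope d) : Set (Fin d → ℝ) :=
  convexHull ℝ (P.verts : Set (Fin d → ℝ))

/-- A proper face of `P`, cut out by a supporting hyperplane. -/
def IsFace (P : Polytope d) (F : Set (Fin d → ℝ)) : Prop :=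
  ∃ u : Fin d → ℝ, u ≠ 0 ∧ ∃ c : ℝ,
    (∀ x ∈ P.carrier, pairing u x ≤ c) ∧ F = {x ∈ P.carrier | pairing u x = c}

/-- A facet of `P`: a nonempty proper face of dimension `d - 1`. -/
def IsFacet (P : Polytope d) (F : Set (Fin d → ℝ)) : Prop :=
  P.IsFace F ∧ F.Nonempty ∧ Module.finrank ℝ (vectorSpan ℝ F) = d - 1

/-- The set of vertices of `P` lying on `F`. -/
def vertsOn (P : Polytope d) (F : Set (Fin d → ℝ)) : Set (Fin d → ℝ) :=
  {v | v ∈ P.verts ∧ v ∈ F}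

/-- `P` is simplicial if every facet has exactly `d` vertices. -/
def IsSimplicial (P : Polytope d) : Prop :=
  ∀ F, P.IsFacet F → (P.vertsOn F).ncard = d

/-- `P` is a lattice polytope. -/
def IsLattice (P : Polytope d) : Prop := ∀ v ∈ P.verts, IsLatticePt v

/-- `u` is the supporting functional `u_F` of the facet `F`, i.e. `⟨u, ·⟩ = 1` on `F`. -/
def IsUF (P : Polytope d) (F : Set (Fin d → ℝ)) (u : Fin d → ℝ) : Prop :=
  ∀ x ∈ F, pairing u x = 1

/-- `u` is the dual basis element `u_F^v`: it takes value `1` at the vertex `v` of `F`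
and `0` at all other vertices of `F`. -/
def IsDualBasisElt (P : Polytope d) (F : Set (Fin d → ℝ)) (v : Fin d → ℝ)
    (u : Fin d → ℝ) : Prop :=
  pairing u v = 1 ∧ ∀ w ∈ P.vertsOn F, w ≠ v → pairing u w = 0

/-- `P` is reflexive: it is a lattice polytope with `0` in its interior, and every
facet lies on a hyperplane `⟨u, ·⟩ = 1` with `u` integral (equivalently, the dual
polytope is a lattice polytope). -/
def IsReflexive (P : Polytope d) : Prop :=
  P.IsLattice ∧ 0 ∈ interior P.carrier ∧
    ∀ F, P.IsFacet F → ∃ u : Fin d → ℤ, P.IsUF F (fun i => (u i : ℝ))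

/-- `P` is terminal: the only lattice points of `P` are its vertices and the origin. -/
def IsTerminal (P : Polytope d) : Prop :=
  ∀ x ∈ P.carrier, IsLatticePt x → x = 0 ∨ x ∈ P.verts

/-- `F'` is the neighboring facet `N(F, v)`: the facet different from `F` containing
all vertices of `F` except `v`. -/
def IsNeighborFacet (P : Polytope d) (F : Set (Fin d → ℝ)) (v : Fin d → ℝ)
    (F' : Set (Fin d → ℝ)) : Prop :=
  P.IsFacet F' ∧ F' ≠ F ∧ ∀ w ∈ P.vertsOn F, w ≠ v → w ∈ F'

/-- `y` is the neighboring vertex `n(F, v)`: the unique vertex of `N(F, v)` not on `F`. -/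
def IsNeighborVertex (P : Polytope d) (F : Set (Fin d → ℝ)) (v : Fin d → ℝ)
    (y : Fin d → ℝ) : Prop :=
  ∃ F', P.IsNeighborFacet F v F' ∧ y ∈ P.vertsOn F' ∧ y ∉ F

/-- `F` is a special facet of `P`: the sum of all vertices of `P` is a nonnegative
linear combination of the vertices of `F`, i.e. `⟨u_F^w, ν_P⟩ ≥ 0` for every vertex
`w` of `F`. -/
def IsSpecialFacet (P : Polytope d) (F : Set (Fin d → ℝ)) : Prop :=
  P.IsFacet F ∧ ∀ w ∈ P.vertsOn F, ∀ uFw : Fin d → ℝ,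
    P.IsDualBasisElt F w uFw → 0 ≤ pairing uFw (∑ v ∈ P.verts, v)

end Polytope

/-- `S` is a `ℤ`-basis of the lattice `ℤ^d ⊆ ℝ^d`. -/
def IsLatticeBasis {d : ℕ} (S : Set (Fin d → ℝ)) : Prop :=
  ∃ v : Fin d → (Fin d → ℝ), Set.range v = S ∧
    ∀ x : Fin d → ℝ, (IsLatticePt x ↔ ∃ a : Fin d → ℤ, x = ∑ i, (a i : ℝ) • v i)

namespace Polytope

variable {d : ℕ}

/-! ### The pairing -/

lemma pairing_add_right (u x y : Fin d → ℝ) :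
    pairing u (x + y) = pairing u x + pairing u y := dotProduct_add u x y

lemma pairing_smul_right (u : Fin d → ℝ) (a : ℝ) (x : Fin d → ℝ) :
    pairing u (a • x) = a * pairing u x := dotProduct_smul a u x

lemma pairing_sub_left (u v x : Fin d → ℝ) :
    pairing (u - v) x = pairing u x - pairing v x := sub_dotProduct u v x

lemma pairing_smul_left (u : Fin d → ℝ) (a : ℝ) (x : Fin d → ℝ) :
    pairing (a • u) x = a * pairing u x := smul_dotProduct a u x

/-- The pairing with `u`, as a linear functional. -/
noncomputable def pairingL (u : Fin d → ℝ) : (Fin d → ℝ) →ₗ[ℝ] ℝ where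
  toFun := pairing u
  map_add' := pairing_add_right u
  map_smul' a x := pairing_smul_right u a x

@[simp] lemma pairingL_apply (u x : Fin d → ℝ) : pairingL u x = pairing u x := rfl

lemma exists_pairing_eq (f : (Fin d → ℝ) →ₗ[ℝ] ℝ) :
    ∃ u : Fin d → ℝ, ∀ x, pairing u x = f x := by
  refine ⟨fun i => f (Pi.single i 1), fun x => ?_⟩
  conv_rhs => rw [pi_eq_sum_univ' x]
  simp [pairing, map_sum, mul_comm]

lemma pairing_eq_of_span {u v : Fin d → ℝ} {S : Set (Fin d → ℝ)}
    (hS : Submodule.span ℝ S = ⊤) (h : ∀ s ∈ S, pairing u s = pairing v s)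
    (x : Fin d → ℝ) : pairing u x = pairing v x := by
  have : pairingL u = pairingL v := LinearMap.ext_on hS h
  exact congrArg (fun f => f x) this

/-! ### Faces, facets and their spans -/

variable (P : Polytope d)

lemma verts_subset {v : Fin d → ℝ} (hv : v ∈ P.verts) : v ∈ P.carrier :=
  subset_convexHull ℝ _ hv

lemma vertsOn_finite (F : Set (Fin d → ℝ)) : (P.vertsOn F).Finite :=
  P.verts.finite_toSet.subset fun _ h => h.1

lemma pairing_le_of_verts {u : Fin d → ℝ} {c : ℝ}
    (h : ∀ v ∈ P.verts, pairing u v ≤ c) : ∀ x ∈ P.carrier, pairing u x ≤ c := by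
  intro x hx
  have hconv : Convex ℝ {x | pairingL u x ≤ c} :=
    convex_halfSpace_le (pairingL u).isLinear c
  exact convexHull_min (fun v hv => h v hv) hconv hx

/-- A face is contained in the linear span of its vertices: in a convex combination attaining
the maximum of `u`, only vertices attaining it have nonzero weight. -/
lemma face_subset_span {F : Set (Fin d → ℝ)} (hF : P.IsFace F) :
    F ⊆ Submodule.span ℝ (P.vertsOn F) := by
  obtain ⟨u, -, c, hle, rfl⟩ := hF
  rintro x ⟨hx, hxc⟩
  have hx' := hx
  rw [carrier, Finset.mem_convexHull'] at hx'
  obtain ⟨a, ha0, ha1, hax⟩ := hx'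
  have hsum : ∑ v ∈ P.verts, a v * (c - pairing u v) = 0 := by
    have h1 : pairingL u x = ∑ v ∈ P.verts, a v * pairing u v := by
      rw [← hax, map_sum]; simp
    simp only [mul_sub, Finset.sum_sub_distrib, ← Finset.sum_mul, ha1]
    rw [← h1, pairingL_apply, hxc]; ring
  have hz := (Finset.sum_eq_zero_iff_of_nonneg fun v hv =>
    mul_nonneg (ha0 v hv) (sub_nonneg.2 (hle v (P.verts_subset hv)))).1 hsum
  rw [← hax]
  refine Submodule.sum_mem _ fun v hv => ?_
  rcases mul_eq_zero.1 (hz v hv) with h | h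
  · simp [h]
  · exact Submodule.smul_mem _ _ (Submodule.subset_span
      ⟨hv, P.verts_subset hv, (sub_eq_zero.1 h).symm⟩)

lemma vectorSpan_le_ker {F : Set (Fin d → ℝ)} {u : Fin d → ℝ} (hu : P.IsUF F u) :
    vectorSpan ℝ F ≤ LinearMap.ker (pairingL u) := by
  rw [vectorSpan_def, Submodule.span_le]
  rintro _ ⟨x, hx, y, hy, rfl⟩
  simp [map_sub, hu x hx, hu y hy]

/-- The direction space of a facet has dimension `d - 1` and does not contain the points of
the facet, so together with one of them it fills the space. -/
lemma span_vertsOn {F : Set (Fin d → ℝ)} (hF : P.IsFacet F) {u : Fin d → ℝ}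
    (hu : P.IsUF F u) : Submodule.span ℝ (P.vertsOn F) = ⊤ := by
  obtain ⟨hface, ⟨p, hp⟩, hdim⟩ := hF
  have hsub := P.face_subset_span hface
  have hlt : vectorSpan ℝ F < Submodule.span ℝ (P.vertsOn F) := by
    refine lt_of_le_of_ne ?_ fun h => ?_
    · rw [vectorSpan_def, Submodule.span_le]
      rintro _ ⟨x, hx, y, hy, rfl⟩
      exact Submodule.sub_mem _ (hsub hx) (hsub hy)
    · have hpk := P.vectorSpan_le_ker hu (h ▸ hsub hp : p ∈ vectorSpan ℝ F)
      rw [LinearMap.mem_ker, pairingL_apply, hu p hp] at hpk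
      exact one_ne_zero hpk
  have h1 := Submodule.finrank_lt_finrank_of_lt hlt
  have h2 := Submodule.finrank_le (Submodule.span ℝ (P.vertsOn F))
  rw [Module.finrank_fin_fun] at h2
  apply Submodule.eq_top_of_finrank_eq
  rw [Module.finrank_fin_fun]
  omega

/-- A functional bounded by `1` on `P` that takes the value `1` on a spanning set of vertices
supports a facet. -/
lemma isFacet_of_span {u : Fin d → ℝ} (hle : ∀ v ∈ P.verts, pairing u v ≤ 1)
    {S : Set (Fin d → ℝ)} (hS : ∀ s ∈ S, s ∈ P.verts ∧ pairing u s = 1)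
    (hne : S.Nonempty) (hspan : Submodule.span ℝ S = ⊤) :
    P.IsFacet {x ∈ P.carrier | pairing u x = 1} := by
  obtain ⟨p, hp⟩ := hne
  have hSF : ∀ s ∈ S, s ∈ {x ∈ P.carrier | pairing u x = 1} :=
    fun s hs => ⟨P.verts_subset (hS s hs).1, (hS s hs).2⟩
  refine ⟨⟨u, ?_, 1, P.pairing_le_of_verts hle, rfl⟩, ⟨p, hSF p hp⟩, ?_⟩
  · rintro rfl
    have := (hS p hp).2
    simp [pairing] at this
  set F := {x ∈ P.carrier | pairing u x = 1} with hF
  have hker := P.vectorSpan_le_ker (F := F) (u := u) fun x hx => hx.2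
  have hlt : vectorSpan ℝ F < ⊤ := by
    refine lt_of_le_of_ne le_top fun h => ?_
    have hpk := hker (h ▸ Submodule.mem_top : p ∈ vectorSpan ℝ F)
    rw [LinearMap.mem_ker, pairingL_apply, (hS p hp).2] at hpk
    exact one_ne_zero hpk
  have h1 := Submodule.finrank_lt hlt.ne
  rw [Module.finrank_fin_fun] at h1
  have hsup : vectorSpan ℝ F ⊔ Submodule.span ℝ {p} = ⊤ := by
    rw [eq_top_iff, ← hspan, Submodule.span_le]
    intro s hs
    have : s = (s - p) + p := by simp
    rw [this]
    exact Submodule.add_mem_sup (vsub_mem_vectorSpan ℝ (hSF s hs) (hSF p hp))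
      (Submodule.mem_span_singleton_self p)
  have h2 := Submodule.finrank_add_le_finrank_add_finrank (vectorSpan ℝ F)
    (Submodule.span ℝ {p})
  have h3 : Module.finrank ℝ (Submodule.span ℝ {p}) ≤ 1 :=
    (finrank_span_le_card {p}).trans (by simp)
  rw [hsup, finrank_top, Module.finrank_fin_fun] at h2
  omega

variable {P}

/-- As `0 ∈ P`, the functional `u_F` is the defining functional of `F` rescaled to level `1`. -/
lemma facet_le_one {F : Set (Fin d → ℝ)} (hF : P.IsFacet F) (h0 : 0 ∈ P.carrier)
    {u : Fin d → ℝ} (hu : P.IsUF F u) :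
    (∀ x ∈ P.carrier, pairing u x ≤ 1) ∧ ∀ x ∈ P.carrier, pairing u x = 1 → x ∈ F := by
  have hspan := P.span_vertsOn hF hu
  obtain ⟨⟨u₀, -, c, hle, hFeq⟩, -, -⟩ := hF
  have hc0 : 0 ≤ c := by simpa [pairing] using hle 0 h0
  have hc : 0 < c := by
    refine lt_of_le_of_ne hc0 fun h => ?_
    have h0F : (0 : Fin d → ℝ) ∈ F := by
      rw [hFeq]; exact ⟨h0, by simp [pairing, ← h]⟩
    simpa [pairing] using hu 0 h0F
  have key : ∀ x, pairing u₀ x = c * pairing u x := by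
    intro x
    rw [← pairing_smul_left]
    refine pairing_eq_of_span hspan (fun s hs => ?_) x
    have hsF := hs.2
    rw [pairing_smul_left, hu s hsF, mul_one]
    rw [hFeq] at hsF
    exact hsF.2
  refine ⟨fun x hx => ?_, fun x hx hx1 => ?_⟩
  · have := hle x hx
    rw [key] at this
    nlinarith
  · rw [hFeq]; exact ⟨hx, by rw [key, hx1, mul_one]⟩

/-! ### The neighbouring facet -/

/-- In a spanning set, `w` may be exchanged for any `y` whose coefficient `⟨u, y⟩` at `w` is
nonzero. -/
lemma span_exchange {S : Set (Fin d → ℝ)} (hS : Submodule.span ℝ S = ⊤)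
    {u w y : Fin d → ℝ} (hw : pairing u w = 1) (hu : ∀ s ∈ S, s ≠ w → pairing u s = 0)
    (hy : pairing u y ≠ 0) : Submodule.span ℝ (insert y (S \ {w})) = ⊤ := by
  have hproj : ∀ z, z - pairing u z • w ∈ Submodule.span ℝ (S \ {w}) := by
    intro z
    have hz : z ∈ Submodule.span ℝ S := hS ▸ Submodule.mem_top
    induction hz using Submodule.span_induction with
    | mem s hs =>
      by_cases h : s = w
      · simp [h, hw]
      · simpa [hu s hs h] using Submodule.subset_span (R := ℝ) (show s ∈ S \ {w} from ⟨hs, h⟩)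
    | zero => simp [pairing]
    | add a b _ _ ha hb =>
      rw [pairing_add_right]
      convert Submodule.add_mem _ ha hb using 1
      module
    | smul a z _ hz =>
      rw [pairing_smul_right]
      convert Submodule.smul_mem _ a hz using 1
      module
  have hmono : Submodule.span ℝ (S \ {w}) ≤ Submodule.span ℝ (insert y (S \ {w})) :=
    Submodule.span_mono (Set.subset_insert _ _)
  have hyw : pairing u y • w ∈ Submodule.span ℝ (insert y (S \ {w})) := by
    have := Submodule.sub_mem _ (Submodule.subset_span (R := ℝ) (Set.mem_insert y (S \ {w})))
      (hmono (hproj y))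
    simpa using this
  rw [Submodule.smul_mem_iff _ hy] at hyw
  rw [eq_top_iff, ← hS, Submodule.span_le]
  intro s hs
  by_cases h : s = w
  · exact h ▸ hyw
  · exact hmono (Submodule.subset_span ⟨hs, h⟩)

/-- The value of an integral functional at a lattice point is an integer. -/
lemma pairing_int (u : Fin d → ℤ) {x : Fin d → ℝ} (hx : IsLatticePt x) :
    ∃ k : ℤ, pairing (fun i => (u i : ℝ)) x = k := by
  choose z hz using hx
  exact ⟨∑ i, u i * z i, by simp [pairing, hz]⟩

/-- Among the vertices at height `0` over `F`, only one can have a negative `w`-coordinate: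
when any vertex has a negative `w`-coordinate, `y` is the vertex outside `F` of the facet that
shares all vertices of `F` but `w`. -/
lemma exists_unique_candidate (hrefl : P.IsReflexive) (hsimp : P.IsSimplicial)
    {F : Set (Fin d → ℝ)} (hF : P.IsFacet F) {uF : Fin d → ℝ} (huF : P.IsUF F uF)
    {w : Fin d → ℝ} (hw : w ∈ P.vertsOn F) {uFw : Fin d → ℝ}
    (hdual : P.IsDualBasisElt F w uFw) :
    ∃ y, ∀ x ∈ P.verts, pairing uF x = 0 → pairing uFw x < 0 → x = y := by
  by_cases hex : ∃ x ∈ P.verts, pairing uFw x < 0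
  swap
  · push Not at hex
    exact ⟨0, fun x hx _ h => absurd h (not_lt.2 (hex x hx))⟩
  have h0 : (0 : Fin d → ℝ) ∈ P.carrier := interior_subset hrefl.2.1
  obtain ⟨hle, hmem⟩ := facet_le_one hF h0 huF
  have hspan := P.span_vertsOn hF huF
  have hnn : ∀ v ∈ P.vertsOn F, 0 ≤ pairing uFw v := by
    intro v hv
    by_cases h : v = w
    · rw [h, hdual.1]; exact zero_le_one
    · rw [hdual.2 v hv h]
  obtain ⟨x₀, hx₀, hx₀neg⟩ := hex
  -- `y` is the first vertex at which `u_F - t u_F^w` reaches the value `1` as `t` grows.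
  obtain ⟨y, hy, hmin⟩ := (P.verts.filter fun v => pairing uFw v < 0).exists_min_image
    (fun v => (1 - pairing uF v) / (-pairing uFw v))
    ⟨x₀, Finset.mem_filter.2 ⟨hx₀, hx₀neg⟩⟩
  obtain ⟨hyv, hyneg⟩ := Finset.mem_filter.1 hy
  have hyF : y ∉ P.vertsOn F := fun h => absurd hyneg (not_lt.2 (hnn y h))
  have hy1 : pairing uF y < 1 := lt_of_le_of_ne (hle y (P.verts_subset hyv))
    fun h => hyF ⟨hyv, hmem y (P.verts_subset hyv) h⟩
  set t := (1 - pairing uF y) / (-pairing uFw y) with ht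
  have htpos : 0 < t := div_pos (by linarith) (by linarith)
  have hpair : ∀ x, pairing (uF - t • uFw) x = pairing uF x - t * pairing uFw x := by
    intro x; rw [pairing_sub_left, pairing_smul_left]
  have hle' : ∀ v ∈ P.verts, pairing (uF - t • uFw) v ≤ 1 := by
    intro v hv
    rw [hpair]
    have h1 := hle v (P.verts_subset hv)
    by_cases hneg : pairing uFw v < 0
    · have h2 : t ≤ (1 - pairing uF v) / (-pairing uFw v) :=
        hmin v (Finset.mem_filter.2 ⟨hv, hneg⟩)
      rw [le_div_iff₀ (by linarith)] at h2
      linarith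
    · have := mul_nonneg htpos.le (not_lt.1 hneg)
      linarith
  have hS : ∀ s ∈ insert y (P.vertsOn F \ {w}),
      s ∈ P.verts ∧ pairing (uF - t • uFw) s = 1 := by
    rintro s (rfl | ⟨hs, hsw⟩)
    · refine ⟨hyv, ?_⟩
      have : t * (-pairing uFw s) = 1 - pairing uF s := div_mul_cancel₀ _ (by linarith)
      rw [hpair]; linarith
    · exact ⟨hs.1, by rw [hpair, huF s hs.2, hdual.2 s hs hsw]; ring⟩
  have hSspan := span_exchange hspan hdual.1 hdual.2 hyneg.ne
  have hF' := P.isFacet_of_span hle' hS (Set.insert_nonempty _ _) hSspan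
  obtain ⟨k, hk⟩ := hrefl.2.2 _ hF'
  have hkeq : ∀ x, pairing (fun i => (k i : ℝ)) x = pairing (uF - t • uFw) x :=
    pairing_eq_of_span hSspan fun s hs => by
      rw [(hS s hs).2, hk s ⟨P.verts_subset (hS s hs).1, (hS s hs).2⟩]
  have hverts : insert y (P.vertsOn F \ {w}) =
      P.vertsOn {x ∈ P.carrier | pairing (uF - t • uFw) x = 1} := by
    refine Set.eq_of_subset_of_ncard_le
      (fun s hs => ⟨(hS s hs).1, P.verts_subset (hS s hs).1, (hS s hs).2⟩) ?_
      (P.vertsOn_finite _)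
    rw [hsimp _ hF', Set.ncard_insert_of_notMem (fun h => hyF h.1)
      ((P.vertsOn_finite F).sdiff), Set.ncard_sdiff_singleton_of_mem hw, hsimp F hF]
    omega
  refine ⟨y, fun x hx hx0 hxneg => ?_⟩
  have hx1 : pairing (uF - t • uFw) x = 1 := by
    obtain ⟨m, hm⟩ := pairing_int k (hrefl.1 x hx)
    rw [hkeq] at hm
    have h1 := hle' x hx
    have h2 : 0 < pairing (uF - t • uFw) x := by
      rw [hpair, hx0]
      have := mul_pos htpos (neg_pos.2 hxneg)
      linarith
    rw [hm] at h1 h2 ⊢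
    have h3 : m ≤ 1 := by exact_mod_cast h1
    have h4 : 0 < m := by exact_mod_cast h2
    have : m = 1 := by omega
    simp [this]
  have hxS : x ∈ insert y (P.vertsOn F \ {w}) := by
    rw [hverts]; exact ⟨hx, P.verts_subset hx, hx1⟩
  rcases hxS with h | h
  · exact h
  · have := huF x h.1.2
    rw [hx0] at this
    exact absurd this zero_ne_one

/-! ### Negative coordinates -/

/-- The origin is an interior point, hence not an extreme point when `d ≥ 1`; the existence of
a facet forces `d ≥ 1`. -/
lemma zero_notMem_verts (h0 : 0 ∈ interior P.carrier) {F : Set (Fin d → ℝ)}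
    (hF : P.IsFacet F) : (0 : Fin d → ℝ) ∉ P.verts := by
  intro hv
  obtain ⟨⟨u, hu, -⟩, -, -⟩ := hF
  have hn : P.carrier ∈ nhds (0 : Fin d → ℝ) := mem_interior_iff_mem_nhds.1 h0
  have h1 : ∀ᶠ t : ℝ in nhds 0, t • u ∈ P.carrier :=
    (Continuous.tendsto' (by fun_prop) 0 0 (by simp)).eventually hn
  have h2 : ∀ᶠ t : ℝ in nhds 0, (-t) • u ∈ P.carrier :=
    (Continuous.tendsto' (by fun_prop) 0 0 (by simp)).eventually hn
  obtain ⟨t, ⟨ht1, ht2⟩, ht⟩ := (((h1.and h2).filter_mono nhdsWithin_le_nhds).and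
    (self_mem_nhdsWithin : Set.Ioi (0 : ℝ) ∈ nhdsWithin 0 (Set.Ioi 0))).exists
  have hmid : (0 : Fin d → ℝ) ∈ openSegment ℝ (t • u) ((-t) • u) :=
    ⟨1 / 2, 1 / 2, by norm_num, by norm_num, by norm_num, by module⟩
  have := (P.vertsExtreme 0 hv).2 ht1 ht2 hmid
  exact hu ((smul_eq_zero.1 this).resolve_left (ne_of_gt ht))

/-- A vertex at height `0` over `F` has a negative coordinate in the basis `V(F)`. -/
lemma exists_neg_coord (hrefl : P.IsReflexive) (hsimp : P.IsSimplicial)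
    {F : Set (Fin d → ℝ)} (hF : P.IsFacet F) {uF : Fin d → ℝ} (huF : P.IsUF F uF)
    {x : Fin d → ℝ} (hx : x ∈ P.verts) (hx0 : pairing uF x = 0) :
    ∃ w ∈ P.vertsOn F, ∃ uFw, P.IsDualBasisElt F w uFw ∧ pairing uFw x < 0 := by
  have : Fintype (P.vertsOn F) := (P.vertsOn_finite F).fintype
  let b : Module.Basis (P.vertsOn F) ℝ (Fin d → ℝ) :=
    basisOfTopLeSpanOfCardEqFinrank Subtype.val
      (by rw [Subtype.range_coe, P.span_vertsOn hF huF])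
      (by rw [Module.finrank_fin_fun, ← Nat.card_eq_fintype_card]; exact hsimp F hF)
  have hb : ∀ i, b i = i.1 := fun i => by simp [b]
  have hsum : ∑ i, b.repr x i = 0 := by
    have h := congrArg (pairingL uF) (b.sum_repr x)
    simp only [map_sum, map_smul, pairingL_apply, hx0, hb, smul_eq_mul] at h
    rw [← h]
    exact Finset.sum_congr rfl fun i _ => by rw [huF _ i.2.2, mul_one]
  have hex : ∃ i, b.repr x i < 0 := by
    by_contra! hall
    have hz := (Finset.sum_eq_zero_iff_of_nonneg fun i _ => hall i).1 hsum
    have hxz : x = 0 := by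
      rw [← b.sum_repr x]
      exact Finset.sum_eq_zero fun i hi => by rw [hz i hi, zero_smul]
    exact zero_notMem_verts hrefl.2.1 hF (hxz ▸ hx)
  obtain ⟨i, hi⟩ := hex
  obtain ⟨u, hu⟩ := exists_pairing_eq (b.coord i)
  refine ⟨i.1, i.2, u, ⟨?_, fun v hv hvi => ?_⟩, by rw [hu]; exact hi⟩
  · rw [hu, ← hb i]; simp
  · rw [hu, show v = b ⟨v, hv⟩ from (hb ⟨v, hv⟩).symm]
    have : (⟨v, hv⟩ : P.vertsOn F) ≠ i := fun h => hvi (congrArg Subtype.val h)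
    simp [this]

end Polytope

/-- For a facet `F` of a simplicial reflexive `d`-polytope `P` and a vertex `w` of
`F`, there is at most one vertex `x` of `P` with `⟨u_F, x⟩ = 0` and `⟨u_F^w, x⟩ < 0`;
consequently, at most `d` vertices of `P` satisfy `⟨u_F, x⟩ = 0`. -/
theorem at_most_d_vertices_on_H0 {d : ℕ} (P : Polytope d) (hrefl : P.IsReflexive)
    (hsimp : P.IsSimplicial)
    (F : Set (Fin d → ℝ)) (hF : P.IsFacet F)
    (uF : Fin d → ℝ) (huF : P.IsUF F uF) :
    (∀ w ∈ P.vertsOn F, ∀ uFw : Fin d → ℝ, P.IsDualBasisElt F w uFw →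
      ∀ x₁ ∈ P.verts, ∀ x₂ ∈ P.verts,
        pairing uF x₁ = 0 → pairing uFw x₁ < 0 →
        pairing uF x₂ = 0 → pairing uFw x₂ < 0 → x₁ = x₂) ∧
    {x | x ∈ P.verts ∧ pairing uF x = 0}.ncard ≤ d := by
  have hfirst : ∀ w ∈ P.vertsOn F, ∀ uFw : Fin d → ℝ, P.IsDualBasisElt F w uFw →
      ∀ x₁ ∈ P.verts, ∀ x₂ ∈ P.verts,
        pairing uF x₁ = 0 → pairing uFw x₁ < 0 →
        pairing uF x₂ = 0 → pairing uFw x₂ < 0 → x₁ = x₂ := by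
    intro w hw uFw hdual x₁ h₁ x₂ h₂ h₁0 h₁n h₂0 h₂n
    obtain ⟨y, hy⟩ := Polytope.exists_unique_candidate hrefl hsimp hF huF hw hdual
    rw [hy x₁ h₁ h₁0 h₁n, hy x₂ h₂ h₂0 h₂n]
  refine ⟨hfirst, ?_⟩
  have hex : ∀ x, x ∈ P.verts ∧ pairing uF x = 0 →
      ∃ w ∈ P.vertsOn F, ∃ uFw, P.IsDualBasisElt F w uFw ∧ pairing uFw x < 0 :=
    fun x hx => Polytope.exists_neg_coord hrefl hsimp hF huF hx.1 hx.2
  choose! g hgF u hdual hneg using hex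
  refine (Set.ncard_le_ncard_of_injOn g hgF (fun x hx y hy hxy => ?_)
    (P.vertsOn_finite F)).trans_eq (hsimp F hF)
  -- The dual vectors `u x` and `u y` are chosen separately; being dual to the same vertex of
  -- the spanning set `V(F)`, they define the same functional.
  have hy' : pairing (u x) y < 0 := by
    refine lt_of_eq_of_lt (Polytope.pairing_eq_of_span (P.span_vertsOn hF huF) ?_ y) (hneg y hy)
    intro s hs
    by_cases h : s = g x
    · rw [h, (hdual x hx).1, hxy, (hdual y hy).1]
    · rw [(hdual x hx).2 s hs h, (hdual y hy).2 s hs (hxy ▸ h)]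
  exact hfirst (g x) (hgF x hx) (u x) (hdual x hx) x hx.1 y hy.1 hx.2 (hneg x hx) hy.2 hy'
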